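/- Let 1 < q < 2 < p < ∞ with 1/q + 1/p = 1. The system B = {ψ_m}_{m=1}^∞ is bi-democratic: there is a constant C such that for every finite A ⊂ ℕ, ‖Σ_{m∈A} ψ_m‖_{L_q} · ‖Σ_{m∈A} ψ_m‖_{L_p} ≤ C |A|. -/

import Mathlib

open MeasureTheory Filter

noncomputable section

/-- Rademacher functions `r_k(t) = sign (sin (2^k π t))`, for `k ≥ 1`. -/
def rademacher (k : ℕ) (t : ℝ) : ℝ := Real.sign (Real.sin ((2:ℝ) ^ k * Real.pi * t))

/-- The Walsh system: for `n = ∑ ε_j 2^(j-1)`, `W_n = ∏ r_j^(ε_j)`. -/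
def walsh (n : ℕ) (t : ℝ) : ℝ :=
  ∏ j ∈ Finset.range n, if n.testBit j then rademacher (j + 1) t else 1

/-- The Olevskiĭ matrix entries `a_{ij}^{(k)}`, with `1 ≤ i, j ≤ 2^k` (1-based indices). -/
def olevskii (k i j : ℕ) : ℝ :=
  if j = 1 then (2:ℝ) ^ (-(k:ℝ) / 2)
  else
    let s := Nat.log 2 (j - 1)
    let ν := j - 2 ^ s
    if (ν - 1) * 2 ^ (k - s) < i ∧ i ≤ (2 * ν - 1) * 2 ^ (k - s - 1) then
      (2:ℝ) ^ (((s:ℝ) - k) / 2)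
    else if (2 * ν - 1) * 2 ^ (k - s - 1) < i ∧ i ≤ ν * 2 ^ (k - s) then
      -((2:ℝ) ^ (((s:ℝ) - k) / 2))
    else 0

/-- `N_k = 2^(10^k)`. -/
def Nn (k : ℕ) : ℕ := 2 ^ 10 ^ k

/-- `F_0 = 0`, `F_k = F_(k-1) + N_k - 1`. -/
def Fn : ℕ → ℕ
  | 0 => 0
  | k + 1 => Fn k + Nn (k + 1) - 1

/-- `φ_k`, the `k`-th (1-based) Walsh function that is not a Rademacher function,
in the Walsh order. -/
def phi (k : ℕ) : ℝ → ℝ := walsh (Nat.nth (fun n => ¬ ∃ m : ℕ, n = 2 ^ m) (k - 1))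

/-- `ψ_i^{(k)} = φ_k/√N_k + ∑_{j=2}^{N_k} a_{ij}^{(10^k)} r_{F_{k-1}+j-1}`. -/
def psiBlock (k i : ℕ) : ℝ → ℝ := fun t =>
  phi k t / Real.sqrt (Nn k) +
    ∑ j ∈ Finset.Icc 2 (Nn k), olevskii (10 ^ k) i j * rademacher (Fn (k - 1) + j - 1) t

/-- Cumulative block lengths: `cum k = N_1 + ⋯ + N_k`. -/
def cum : ℕ → ℕ
  | 0 => 0
  | k + 1 => cum k + Nn (k + 1)

lemma le_cum (k : ℕ) : k ≤ cum k := by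
  induction k with
  | zero => simp [cum]
  | succ k ih =>
      have h : 1 ≤ Nn (k + 1) := Nat.one_le_two_pow
      simp only [cum]; omega

/-- `psi m` is `ψ_{m+1}`, the `(m+1)`-th element of the system
`B = (ψ_1^{(1)}, …, ψ_{N_1}^{(1)}, ψ_1^{(2)}, …)` (0-based global indexing). -/
def psi (m : ℕ) : ℝ → ℝ :=
  let k := Nat.find (show ∃ k, m + 1 ≤ cum k from ⟨m + 1, le_cum (m + 1)⟩)
  psiBlock k (m + 1 - cum (k - 1))

/-- `⟨f, g⟩ = ∫_0^1 f g`. -/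
def inner01 (f g : ℝ → ℝ) : ℝ := ∫ t in Set.Icc (0:ℝ) 1, f t * g t

/-- The `L_p([0,1])` norm of a function. -/
def LpNorm (p : ℝ) (f : ℝ → ℝ) : ℝ :=
  (∫ t in Set.Icc (0:ℝ) 1, |f t| ^ p) ^ (1 / p)

/-- `ρ` is a greedy ordering for the coefficient sequence `c`. -/
def IsGreedyOrdering (c : ℕ → ℝ) (ρ : ℕ → ℕ) : Prop :=
  Function.Injective ρ ∧ {j | c j ≠ 0} ⊆ Set.range ρ ∧
    ∀ j k : ℕ, j < k → |c (ρ k)| < |c (ρ j)| ∨ (|c (ρ k)| = |c (ρ j)| ∧ ρ j < ρ k)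

end

/-!
Split `∑_{m ∈ A} ψ_m` into its Walsh and Rademacher components. Let `n_k` be the number of
elements of `A` in the `k`-th block, so `n_k ≤ min (N_k, |A|)`. The Walsh component
`∑ n_k φ_k / √N_k` is bounded uniformly by `∑ min (√N_k, |A| / √N_k)`, a sum that grows and then
decays at least geometrically around `√N_k ≈ √|A|`, hence is at most `6 √|A|`. Distinct blocks use
distinct Rademacher functions, and by orthogonality of the Olevskiĭ matrices (whose columns are
Haar functions) the squared coefficients of the Rademacher component sum to at most `∑ n_k = |A|`,
so that component is subgaussian with variance proxy `|A|`. Therefore every `L_r` norm of the sum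
is at most a constant multiple of `√|A|`.
-/

open scoped ENNReal NNReal

section GeometricSums

/- The potential `u ↦ 6xu / (u + x)` gains at least the next summand whenever `u` at least
doubles. -/
lemma min_sq_div_add_le {x u v : ℝ} (hx : 0 ≤ x) (hu : 0 ≤ u) (hv : 0 < v) (huv : 2 * u ≤ v) :
    min v (x ^ 2 / v) + 6 * x * (u / (u + x)) ≤ 6 * x * (v / (v + x)) := by
  have halving : u / (u + x) ≤ v / (v + 2 * x) := by
    rcases hx.eq_or_lt with rfl | hx
    · simpa [hv.ne'] using div_self_le_one u
    · rw [div_le_div_iff₀ (by positivity) (by positivity)]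
      nlinarith
  have increment : min v (x ^ 2 / v) ≤ 6 * x * (v / (v + x)) - 6 * x * (v / (v + 2 * x)) := by
    have hdiff : 6 * x * (v / (v + x)) - 6 * x * (v / (v + 2 * x))
        = 6 * x ^ 2 * v / ((v + x) * (v + 2 * x)) := by
      field_simp
      ring
    rw [hdiff]
    rcases le_total v x with hvx | hxv
    · refine (min_le_left _ _).trans ?_
      rw [le_div_iff₀ (by positivity)]
      have : (v + x) * (v + 2 * x) ≤ 6 * x ^ 2 := by nlinarith
      nlinarith
    · refine (min_le_right _ _).trans ?_
      rw [div_le_div_iff₀ (by positivity) (by positivity)]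
      have : (v + x) * (v + 2 * x) ≤ 6 * v ^ 2 := by nlinarith
      nlinarith [mul_le_mul_of_nonneg_left this (sq_nonneg x)]
  have : 6 * x * (u / (u + x)) ≤ 6 * x * (v / (v + 2 * x)) := by gcongr
  linarith

lemma sum_min_sq_div_le {a : ℕ → ℝ} (ha_pos : ∀ k, 0 < a k) (ha : ∀ k, 2 * a k ≤ a (k + 1))
    {x : ℝ} (hx : 0 ≤ x) (K : ℕ) :
    ∑ k ∈ Finset.range K, min (a k) (x ^ 2 / a k) ≤ 6 * x := by
  have potential (n : ℕ) : ∑ k ∈ Finset.range (n + 1), min (a k) (x ^ 2 / a k)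
      ≤ 6 * x * (a n / (a n + x)) := by
    induction n with
    | zero => simpa using min_sq_div_add_le hx le_rfl (ha_pos 0) (by simpa using (ha_pos 0).le)
    | succ n ih =>
      rw [Finset.sum_range_succ, add_comm]
      exact (add_le_add_right ih _).trans
        (min_sq_div_add_le hx (ha_pos n).le (ha_pos _) (ha n))
  rcases K with _ | n
  · simpa using hx
  · refine (potential n).trans (mul_le_of_le_one_right (by positivity) ?_)
    have := ha_pos n
    exact div_le_one_of_le₀ (by linarith) (by positivity)

end GeometricSums

section Rademacher

open ProbabilityTheory

/-- Lebesgue measure on `[0, 1]`, seen as a measure on `ℝ`: the probability space on which the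
Rademacher functions live. -/
noncomputable abbrev volumeUnit : Measure ℝ := volume.restrict (Set.Icc 0 1)

instance : IsProbabilityMeasure volumeUnit := ⟨by simp⟩

lemma measurable_rademacher (k : ℕ) : Measurable (rademacher k) := by
  have measurable_sign : Measurable Real.sign :=
    .ite measurableSet_Iio measurable_const
      (.ite measurableSet_Ioi measurable_const measurable_const)
  exact measurable_sign.comp (by fun_prop)

lemma abs_rademacher_le_one (k : ℕ) (t : ℝ) : |rademacher k t| ≤ 1 := by
  rcases Real.sign_apply_eq (Real.sin (2 ^ k * Real.pi * t)) with h | h | h <;>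
    simp [rademacher, h]

lemma abs_walsh_le_one (n : ℕ) (t : ℝ) : |walsh n t| ≤ 1 := by
  rw [walsh, Finset.abs_prod]
  refine Finset.prod_le_one (fun _ _ ↦ abs_nonneg _) fun j _ ↦ ?_
  split_ifs
  · exact abs_rademacher_le_one _ _
  · simp

lemma rademacher_succ (k : ℕ) (t : ℝ) : rademacher (k + 1) t = rademacher k (2 * t) := by
  rw [rademacher, rademacher, pow_succ]
  ring_nf

lemma rademacher_succ_periodic (k : ℕ) : Function.Periodic (rademacher (k + 1)) 1 := fun t ↦ by
  rw [rademacher, rademacher, ← Real.sin_add_nat_mul_two_pi (2 ^ (k + 1) * Real.pi * t) (2 ^ k)]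
  congr 2
  push_cast
  ring

lemma rademacher_succ_one_sub (k : ℕ) (t : ℝ) :
    rademacher (k + 1) (1 - t) = -rademacher (k + 1) t := by
  rw [rademacher, rademacher, ← Real.sign_neg, ← Real.sin_nat_mul_two_pi_sub _ (2 ^ k)]
  congr 2
  push_cast
  ring

lemma rademacher_one_of_lt_half {t : ℝ} (h0 : 0 < t) (ht : t < 1 / 2) : rademacher 1 t = 1 :=
  Real.sign_of_pos <| Real.sin_pos_of_pos_of_lt_pi (by positivity) (by nlinarith [Real.pi_pos])

lemma rademacher_one_of_half_lt {t : ℝ} (ht : 1 / 2 < t) (h1 : t < 1) : rademacher 1 t = -1 := by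
  refine Real.sign_of_neg ?_
  rw [← Real.sin_sub_two_pi]
  exact Real.sin_neg_of_neg_of_neg_pi_lt (by nlinarith [Real.pi_pos]) (by nlinarith [Real.pi_pos])

lemma setLIntegral_comp_two_mul_of_periodic {G : ℝ → ℝ≥0∞} (hG : Function.Periodic G 1)
    (n : ℕ) :
    ∫⁻ t in Set.Ioo (n / 2 : ℝ) ((n + 1) / 2), G (2 * t) = 2⁻¹ * ∫⁻ t in Set.Ioo 0 1, G t := by
  have himage : (fun t : ℝ ↦ 2 * t + -n) '' Set.Ioo (n / 2 : ℝ) ((n + 1) / 2) = Set.Ioo 0 1 := by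
    rw [Set.image_affine_Ioo two_pos]
    ring_nf
  have hshift (t : ℝ) : G (2 * t + -n) = G (2 * t) := by
    simpa [← sub_eq_add_neg] using hG.sub_nat_mul_eq (x := 2 * t) n
  have hderiv (t : ℝ) : HasDerivAt (fun t : ℝ ↦ 2 * t + -n) 2 t := by
    simpa using ((hasDerivAt_id t).const_mul 2).add_const (-(n : ℝ))
  rw [← himage, lintegral_image_eq_lintegral_abs_deriv_mul measurableSet_Ioo
    (fun t _ ↦ (hderiv t).hasDerivWithinAt) (fun a _ b _ h ↦ by simpa using h)]
  simp only [hshift, abs_two, ENNReal.ofReal_ofNat]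
  rw [lintegral_const_mul' _ _ (by simp), ← mul_assoc, ENNReal.inv_mul_cancel (by simp) (by simp),
    one_mul]

lemma setLIntegral_unit_eq_add_halves (F : ℝ → ℝ≥0∞) :
    ∫⁻ t in Set.Ioo (0 : ℝ) 1, F t
      = (∫⁻ t in Set.Ioo (0 : ℝ) (1 / 2), F t) + ∫⁻ t in Set.Ioo (1 / 2 : ℝ) 1, F t := by
  simp only [setLIntegral_congr Ioo_ae_eq_Ioc]
  rw [← lintegral_union measurableSet_Ioc (Set.Ioc_disjoint_Ioc_of_le le_rfl),
    Set.Ioc_union_Ioc_eq_Ioc (by norm_num) (by norm_num)]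

/- The first binary digit of `t` is independent of all later ones, which are those of `2t`. -/
lemma setLIntegral_rademacher_one_mul (h : ℝ → ℝ≥0∞) {G : ℝ → ℝ≥0∞} (hG : Measurable G)
    (hper : Function.Periodic G 1) :
    ∫⁻ t in Set.Ioo 0 1, h (rademacher 1 t) * G (2 * t)
      = (h 1 + h (-1)) / 2 * ∫⁻ t in Set.Ioo 0 1, G t := by
  have left : ∫⁻ t in Set.Ioo 0 (1 / 2), h (rademacher 1 t) * G (2 * t)
      = h 1 * (2⁻¹ * ∫⁻ t in Set.Ioo 0 1, G t) := by
    rw [setLIntegral_congr_fun (g := fun t ↦ h 1 * G (2 * t)) measurableSet_Ioo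
      (fun t ht ↦ by simp only [rademacher_one_of_lt_half ht.1 ht.2]),
      lintegral_const_mul _ (by fun_prop)]
    simpa using congrArg (h 1 * ·) (setLIntegral_comp_two_mul_of_periodic hper 0)
  have right : ∫⁻ t in Set.Ioo (1 / 2) 1, h (rademacher 1 t) * G (2 * t)
      = h (-1) * (2⁻¹ * ∫⁻ t in Set.Ioo 0 1, G t) := by
    rw [setLIntegral_congr_fun (g := fun t ↦ h (-1) * G (2 * t)) measurableSet_Ioo
      (fun t ht ↦ by simp only [rademacher_one_of_half_lt ht.1 ht.2]),
      lintegral_const_mul _ (by fun_prop)]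
    simpa [one_add_one_eq_two] using
      congrArg (h (-1) * ·) (setLIntegral_comp_two_mul_of_periodic hper 1)
  rw [setLIntegral_unit_eq_add_halves, left, right, ENNReal.div_eq_inv_mul]
  ring

lemma setLIntegral_prod_range_rademacher {g : ℕ → ℝ → ℝ≥0∞} (hg : ∀ l, Measurable (g l))
    (L : ℕ) :
    ∫⁻ t in Set.Ioo 0 1, ∏ l ∈ Finset.range L, g l (rademacher (l + 1) t)
      = ∏ l ∈ Finset.range L, (g l 1 + g l (-1)) / 2 := by
  induction L generalizing g with
  | zero => simp
  | succ L ih =>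
    simp only [Finset.prod_range_succ', ← ih fun l ↦ hg (l + 1), rademacher_succ (_ + 1), zero_add]
    simp only [mul_comm _ (g 0 _), mul_comm _ ((g 0 1 + g 0 (-1)) / 2)]
    refine setLIntegral_rademacher_one_mul (g 0)
      (G := fun t ↦ ∏ l ∈ Finset.range L, g (l + 1) (rademacher (l + 1) t)) ?_ fun t ↦ ?_
    · exact Finset.measurable_prod _ fun l _ ↦ (hg _).comp (measurable_rademacher _)
    · simp only [rademacher_succ_periodic _ t]

lemma lintegral_prod_rademacher {S : Finset ℕ} {g : ℕ → ℝ → ℝ≥0∞}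
    (hg : ∀ l ∈ S, Measurable (g l)) :
    ∫⁻ t, ∏ l ∈ S, g l (rademacher (l + 1) t) ∂volumeUnit = ∏ l ∈ S, (g l 1 + g l (-1)) / 2 := by
  obtain ⟨L, hL⟩ := S.exists_nat_subset_range
  have hext := setLIntegral_prod_range_rademacher (g := fun l ↦ if l ∈ S then g l else 1)
    (fun l ↦ by split_ifs with hl; exacts [hg l hl, measurable_one]) L
  have hmean (l : ℕ) : ((if l ∈ S then g l 1 else 1) + (if l ∈ S then g l (-1) else 1)) / 2
      = if l ∈ S then (g l 1 + g l (-1)) / 2 else 1 := by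
    split_ifs
    · rfl
    · simp [one_add_one_eq_two, ENNReal.div_self]
  simpa only [ite_apply, Pi.one_apply, hmean, Finset.prod_ite_mem, Finset.inter_eq_right.2 hL,
    setLIntegral_congr Ioo_ae_eq_Icc] using hext

lemma iIndepFun_rademacher : iIndepFun (fun k ↦ rademacher (k + 1)) volumeUnit := by
  refine iIndepFun_iff_measure_inter_preimage_eq_mul.2 fun S s hs ↦ ?_
  have hinter (T : Finset ℕ) (hT : T ⊆ S) :
      volumeUnit (⋂ l ∈ T, rademacher (l + 1) ⁻¹' s l)
        = ∏ l ∈ T, ((s l).indicator 1 1 + (s l).indicator 1 (-1)) / 2 := by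
    rw [← lintegral_prod_rademacher fun l hl ↦ measurable_one.indicator (hs l (hT hl)),
      ← lintegral_indicator_one
        (T.measurableSet_biInter fun l hl ↦ measurable_rademacher _ (hs l (hT hl)))]
    refine lintegral_congr fun t ↦ Eq.symm ?_
    simpa only [one_pow] using! prod_indicator_const_apply T
      (fun l ↦ rademacher (l + 1) ⁻¹' s l) (1 : ℝ → ℝ≥0∞) t
  have hsingle (l : ℕ) (hl : l ∈ S) : volumeUnit (rademacher (l + 1) ⁻¹' s l)
      = ((s l).indicator 1 1 + (s l).indicator 1 (-1)) / 2 := by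
    simpa using hinter {l} (Finset.singleton_subset_iff.2 hl)
  rw [hinter S subset_rfl, Finset.prod_congr rfl hsingle]

lemma integral_rademacher_succ (k : ℕ) : ∫ t, rademacher (k + 1) t ∂volumeUnit = 0 := by
  rw [integral_Icc_eq_integral_Ioc, ← intervalIntegral.integral_of_le zero_le_one]
  have hsymm := intervalIntegral.integral_comp_sub_left (a := 0) (b := 1) (rademacher (k + 1)) 1
  simp only [rademacher_succ_one_sub, intervalIntegral.integral_neg, sub_self, sub_zero] at hsymm
  linarith

lemma hasSubgaussianMGF_rademacher (k : ℕ) :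
    HasSubgaussianMGF (rademacher (k + 1)) 1 volumeUnit := by
  have hoeffding := hasSubgaussianMGF_of_mem_Icc_of_integral_eq_zero (μ := volumeUnit)
    (measurable_rademacher (k + 1)).aemeasurable
    (ae_of_all _ fun t ↦ abs_le.1 (abs_rademacher_le_one (k + 1) t)) (integral_rademacher_succ k)
  have hparam : (‖(1 : ℝ) - -1‖₊ / 2) ^ 2 = 1 := by
    norm_num
  rwa [hparam] at hoeffding

lemma hasSubgaussianMGF_sum_rademacher {ι : Type*} {s : Finset ι} {e : ι → ℕ}
    (he : Set.InjOn e s) (c : ι → ℝ) :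
    HasSubgaussianMGF (fun t ↦ ∑ i ∈ s, c i * rademacher (e i + 1) t) (∑ i ∈ s, ‖c i‖₊ ^ 2)
      volumeUnit := by
  have hindep : iIndepFun (fun (i : s) t ↦ c i * rademacher (e i + 1) t) volumeUnit :=
    (iIndepFun_rademacher.precomp he.injective).comp (fun i x ↦ c i * x) fun _ ↦ by fun_prop
  have hsubG (i : s) :
      HasSubgaussianMGF (fun t ↦ c i * rademacher (e i + 1) t) (‖c i‖₊ ^ 2) volumeUnit := by
    have hparam : ‖c i‖₊ ^ 2 = .mk (c i ^ 2) (sq_nonneg _) * 1 := NNReal.eq (by simp)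
    rw [hparam]
    exact (hasSubgaussianMGF_rademacher (e i)).const_mul (c i)
  simpa only [Finset.sum_coe_sort s fun i ↦ ‖c i‖₊ ^ 2,
    fun t ↦ Finset.sum_coe_sort s fun i ↦ c i * rademacher (e i + 1) t] using
    HasSubgaussianMGF.sum_of_iIndepFun hindep (s := Finset.univ) fun i _ ↦ hsubG i

end Rademacher

section Moments

open ProbabilityTheory

/- The bound `|x| ^ r ≤ (r / t) ^ r * exp (t * |x|)` trades moments for exponential moments. -/
lemma integral_abs_rpow_le_of_hasSubgaussianMGF {Ω : Type*} {mΩ : MeasurableSpace Ω}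
    {μ : Measure Ω} {X f : Ω → ℝ} {c : ℝ≥0} (hX : HasSubgaussianMGF X c μ) {a : ℝ}
    (hf : ∀ ω, |f ω| ≤ a + |X ω|) {r t : ℝ} (hr : 0 ≤ r) (ht : 0 < t) :
    ∫ ω, |f ω| ^ r ∂μ ≤ (r / t) ^ r * (2 * Real.exp (t * a + c * t ^ 2 / 2)) := by
  have hpointwise (ω : Ω) :
      |f ω| ^ r ≤ (r / t) ^ r * Real.exp (t * a)
        * (Real.exp (t * X ω) + Real.exp (-t * X ω)) := by
    calc |f ω| ^ r ≤ (r / t) ^ r * Real.exp (t * |f ω|) := by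
          simpa only [abs_of_pos ht] using rpow_abs_le_mul_exp_abs (f ω) hr ht.ne'
      _ ≤ (r / t) ^ r * Real.exp (t * (a + |X ω|)) := by gcongr; exact hf ω
      _ = (r / t) ^ r * Real.exp (t * a) * Real.exp |t * X ω| := by
          rw [mul_add, Real.exp_add, abs_mul, abs_of_pos ht, mul_assoc]
      _ ≤ _ := by
          gcongr
          simpa only [neg_mul] using Real.exp_abs_le (t * X ω)
  have hint (s : ℝ) := hX.integrable_exp_mul s
  calc ∫ ω, |f ω| ^ r ∂μ
      ≤ ∫ ω, (r / t) ^ r * Real.exp (t * a)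
          * (Real.exp (t * X ω) + Real.exp (-t * X ω)) ∂μ :=
        integral_mono_of_nonneg (ae_of_all _ fun ω ↦ by positivity)
          (((hint t).add (hint (-t))).const_mul _) (ae_of_all _ hpointwise)
    _ = (r / t) ^ r * Real.exp (t * a) * (mgf X μ t + mgf X μ (-t)) := by
        rw [integral_const_mul, integral_add (hint t) (hint (-t)), mgf, mgf]
    _ ≤ (r / t) ^ r * Real.exp (t * a)
          * (Real.exp (c * t ^ 2 / 2) + Real.exp (c * (-t) ^ 2 / 2)) := by
        gcongr <;> exact hX.mgf_le _
    _ = _ := by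
        rw [neg_sq, Real.exp_add]
        ring

lemma LpNorm_nonneg (r : ℝ) (f : ℝ → ℝ) : 0 ≤ LpNorm r f :=
  Real.rpow_nonneg (integral_nonneg fun _ ↦ Real.rpow_nonneg (abs_nonneg _) _) _

lemma LpNorm_zero {r : ℝ} (hr : r ≠ 0) : LpNorm r (fun _ ↦ 0) = 0 := by
  simp [LpNorm, hr]

/- Exponential moments are taken at the scale `1 / σ` of the fluctuations. -/
lemma LpNorm_le_of_hasSubgaussianMGF {X f : ℝ → ℝ} {c : ℝ≥0} {M σ r : ℝ}
    (hX : HasSubgaussianMGF X c volumeUnit) (hσ : 0 < σ) (hc : c ≤ σ ^ 2)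
    (hf : ∀ t, |f t| ≤ M * σ + |X t|) (hr : 0 < r) :
    LpNorm r f ≤ r * (2 * Real.exp (M + 1 / 2)) ^ (1 / r) * σ := by
  have hmoment : ∫ t in Set.Icc 0 1, |f t| ^ r ≤ (r * σ) ^ r * (2 * Real.exp (M + 1 / 2)) := by
    refine (integral_abs_rpow_le_of_hasSubgaussianMGF hX hf hr.le (inv_pos.2 hσ)).trans ?_
    rw [div_inv_eq_mul]
    gcongr
    · rw [mul_left_comm, inv_mul_cancel₀ hσ.ne', mul_one]
    · rw [inv_pow, ← div_eq_mul_inv]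
      exact div_le_one_of_le₀ hc (by positivity)
  calc LpNorm r f ≤ ((r * σ) ^ r * (2 * Real.exp (M + 1 / 2))) ^ (1 / r) := by
        refine Real.rpow_le_rpow ?_ hmoment (by positivity)
        exact integral_nonneg fun t ↦ by positivity
    _ = r * (2 * Real.exp (M + 1 / 2)) ^ (1 / r) * σ := by
        rw [Real.mul_rpow (by positivity) (by positivity), ← Real.rpow_mul (by positivity),
          mul_one_div_cancel hr.ne', Real.rpow_one]
        ring

end Moments

section Olevskii

/-- The sum of `x` over the `ν`-th dyadic interval `[ν 2^m, (ν + 1) 2^m)` of length `2^m`. -/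
def dyadicSum (x : ℕ → ℝ) (m ν : ℕ) : ℝ := ∑ i ∈ Finset.Ico (ν * 2 ^ m) ((ν + 1) * 2 ^ m), x i

/-- The squared `ℓ²` norm of the conditional expectation of `x` on the first `n` dyadic intervals
of length `2^m`. -/
noncomputable def dyadicEnergy (x : ℕ → ℝ) (m n : ℕ) : ℝ :=
  (∑ ν ∈ Finset.range n, dyadicSum x m ν ^ 2) / 2 ^ m

variable (x : ℕ → ℝ)

lemma dyadicSum_zero_left (ν : ℕ) : dyadicSum x 0 ν = x ν := by
  simp [dyadicSum]

lemma dyadicSum_zero_right (m : ℕ) : dyadicSum x m 0 = ∑ i ∈ Finset.range (2 ^ m), x i := by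
  simp [dyadicSum]

lemma dyadicSum_succ (m ν : ℕ) :
    dyadicSum x (m + 1) ν = dyadicSum x m (2 * ν) + dyadicSum x m (2 * ν + 1) := by
  have hleft : ν * 2 ^ (m + 1) = 2 * ν * 2 ^ m := by ring
  have hright : (ν + 1) * 2 ^ (m + 1) = (2 * ν + 1 + 1) * 2 ^ m := by ring
  rw [dyadicSum, hleft, hright, dyadicSum, dyadicSum,
    Finset.sum_Ico_consecutive _ (by gcongr; omega) (by gcongr; omega)]

lemma dyadicEnergy_two_mul (m n : ℕ) :
    dyadicEnergy x m (2 * n) = dyadicEnergy x (m + 1) n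
      + (∑ ν ∈ Finset.range n,
          (dyadicSum x m (2 * ν) - dyadicSum x m (2 * ν + 1)) ^ 2) / 2 ^ (m + 1) := by
  have hparallelogram : 2 * ∑ ν ∈ Finset.range (2 * n), dyadicSum x m ν ^ 2
      = ∑ ν ∈ Finset.range n, dyadicSum x (m + 1) ν ^ 2
        + ∑ ν ∈ Finset.range n, (dyadicSum x m (2 * ν) - dyadicSum x m (2 * ν + 1)) ^ 2 := by
    induction n with
    | zero => simp
    | succ n ih =>
      rw [mul_add_one, Finset.sum_range_succ, Finset.sum_range_succ, mul_add, mul_add, ih,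
        Finset.sum_range_succ, Finset.sum_range_succ, dyadicSum_succ]
      ring
  rw [dyadicEnergy, dyadicEnergy, ← add_div, ← hparallelogram, pow_succ]
  field_simp

lemma two_rpow_half_sq (a : ℝ) : ((2 : ℝ) ^ (a / 2)) ^ 2 = 2 ^ a := by
  rw [← Real.rpow_mul_natCast zero_le_two]
  norm_num

lemma sum_olevskii_one_mul (k : ℕ) :
    ∑ i ∈ Finset.range (2 ^ k), olevskii k (i + 1) 1 * x i
      = 2 ^ (-(k : ℝ) / 2) * dyadicSum x k 0 := by
  simp [olevskii, dyadicSum_zero_right, Finset.mul_sum]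

/- The column `2 ^ s + ν + 1` is the Haar function of the `ν`-th dyadic interval of
length `2 ^ (m + 1)`. -/
lemma olevskii_haar {s ν : ℕ} (m i : ℕ) (hν : ν < 2 ^ s) :
    olevskii (s + (m + 1)) (i + 1) (2 ^ s + ν + 1) = 2 ^ (-((m + 1 : ℕ) : ℝ) / 2) *
      ((if i ∈ Finset.Ico (2 * ν * 2 ^ m) ((2 * ν + 1) * 2 ^ m) then 1 else 0)
        - if i ∈ Finset.Ico ((2 * ν + 1) * 2 ^ m) ((2 * ν + 1 + 1) * 2 ^ m) then 1 else 0) := by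
  have hlog : Nat.log 2 (2 ^ s + ν) = s := by
    rw [Nat.log_eq_iff (by right; omega), pow_succ]
    omega
  have hindex : 2 ^ s + ν + 1 - 2 ^ s = ν + 1 := by omega
  have hmiddle : 2 * (ν + 1) - 1 = 2 * ν + 1 := by omega
  have hexp : ((s : ℝ) - (s + (m + 1) : ℕ)) / 2 = -((m + 1 : ℕ) : ℝ) / 2 := by
    push_cast
    ring
  have hleft : ν * 2 ^ (m + 1) = 2 * ν * 2 ^ m := by ring
  have hright : (ν + 1) * 2 ^ (m + 1) = (2 * ν + 1 + 1) * 2 ^ m := by ring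
  have hpos : 2 ^ s + ν + 1 ≠ 1 := by have := Nat.two_pow_pos s; omega
  simp only [olevskii, if_neg hpos, Nat.add_sub_cancel, hlog, hindex, hmiddle, hexp,
    Nat.add_sub_cancel_left, hleft, hright, Finset.mem_Ico, Nat.lt_succ_iff, Nat.succ_le_iff]
  split_ifs <;> first | omega | simp

lemma sum_olevskii_haar_mul {s ν : ℕ} (m : ℕ) (hν : ν < 2 ^ s) :
    ∑ i ∈ Finset.range (2 ^ (s + (m + 1))),
        olevskii (s + (m + 1)) (i + 1) (2 ^ s + ν + 1) * x i
      = 2 ^ (-((m + 1 : ℕ) : ℝ) / 2) * (dyadicSum x m (2 * ν) - dyadicSum x m (2 * ν + 1)) := by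
  have hsub {j : ℕ} (hj : j ≤ 2 * ν + 1) :
      Finset.Ico (j * 2 ^ m) ((j + 1) * 2 ^ m) ⊆ Finset.range (2 ^ (s + (m + 1))) := by
    have : (j + 1) * 2 ^ m ≤ 2 ^ (s + (m + 1)) := by
      calc (j + 1) * 2 ^ m ≤ 2 ^ (s + 1) * 2 ^ m := by gcongr; omega
        _ = 2 ^ (s + (m + 1)) := by ring
    intro i hi
    exact Finset.mem_range.2 ((Finset.mem_Ico.1 hi).2.trans_le this)
  have hsum {j : ℕ} (hj : j ≤ 2 * ν + 1) :
      ∑ i ∈ Finset.range (2 ^ (s + (m + 1))),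
          (if i ∈ Finset.Ico (j * 2 ^ m) ((j + 1) * 2 ^ m) then 1 else 0) * x i
        = dyadicSum x m j := by
    simp only [ite_mul, one_mul, zero_mul, Finset.sum_ite_mem, Finset.inter_eq_right.2 (hsub hj),
      dyadicSum]
  rw [← hsum (by omega : 2 * ν ≤ 2 * ν + 1), ← hsum le_rfl, ← Finset.sum_sub_distrib,
    Finset.mul_sum]
  refine Finset.sum_congr rfl fun i _ ↦ ?_
  rw [olevskii_haar m i hν]
  ring

lemma sum_sq_sum_olevskii_mul_of_add_eq {s m k : ℕ} (hk : s + m = k) :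
    ∑ j ∈ Finset.range (2 ^ s),
        (∑ i ∈ Finset.range (2 ^ k), olevskii k (i + 1) (j + 1) * x i) ^ 2
      = dyadicEnergy x m (2 ^ s) := by
  induction s generalizing m with
  | zero =>
    obtain rfl : m = k := by omega
    rw [pow_zero, Finset.sum_range_one, sum_olevskii_one_mul, mul_pow, two_rpow_half_sq,
      Real.rpow_neg zero_le_two, Real.rpow_natCast, dyadicEnergy, Finset.sum_range_one,
      inv_mul_eq_div]
  | succ s ih =>
    obtain rfl : s + (m + 1) = k := by omega
    have hnew (ν : ℕ) (hν : ν ∈ Finset.range (2 ^ s)) :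
        (∑ i ∈ Finset.range (2 ^ (s + (m + 1))),
            olevskii (s + (m + 1)) (i + 1) (2 ^ s + ν + 1) * x i) ^ 2
          = (dyadicSum x m (2 * ν) - dyadicSum x m (2 * ν + 1)) ^ 2 / 2 ^ (m + 1) := by
      rw [sum_olevskii_haar_mul x m (Finset.mem_range.1 hν), mul_pow, two_rpow_half_sq,
        Real.rpow_neg zero_le_two, Real.rpow_natCast, inv_mul_eq_div]
    rw [pow_succ', dyadicEnergy_two_mul, two_mul, Finset.sum_range_add, ih rfl,
      Finset.sum_congr rfl hnew, Finset.sum_div]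

lemma sum_sq_sum_olevskii_mul (k : ℕ) :
    ∑ j ∈ Finset.range (2 ^ k),
        (∑ i ∈ Finset.range (2 ^ k), olevskii k (i + 1) (j + 1) * x i) ^ 2
      = ∑ i ∈ Finset.range (2 ^ k), x i ^ 2 := by
  simpa [dyadicEnergy, dyadicSum_zero_left] using
    sum_sq_sum_olevskii_mul_of_add_eq x (add_zero k)

lemma sum_sq_sum_olevskii_le_card {k : ℕ} {E : Finset ℕ} (hE : E ⊆ Finset.range (2 ^ k)) :
    ∑ j ∈ Finset.Icc 2 (2 ^ k), (∑ i ∈ E, olevskii k (i + 1) j) ^ 2 ≤ E.card := by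
  have hparseval := sum_sq_sum_olevskii_mul (fun i ↦ if i ∈ E then 1 else 0) k
  simp only [mul_ite, mul_one, mul_zero, ite_pow, one_pow, ne_eq, OfNat.ofNat_ne_zero,
    not_false_eq_true, zero_pow, Finset.sum_ite_mem, Finset.inter_eq_right.2 hE,
    Finset.sum_const, nsmul_eq_mul] at hparseval
  rw [← hparseval, Finset.range_eq_Ico,
    Finset.sum_Ico_add' (fun j ↦ (∑ i ∈ E, olevskii k (i + 1) j) ^ 2) 0 (2 ^ k) 1]
  exact Finset.sum_le_sum_of_subset_of_nonneg (fun j ↦ by simp; omega)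
    fun _ _ _ ↦ sq_nonneg _

end Olevskii

section System

lemma psi_cum_add {k i : ℕ} (hi : i < Nn (k + 1)) : psi (cum k + i) = psiBlock (k + 1) (i + 1) := by
  have hmono : Monotone cum := monotone_nat_of_le_succ fun k ↦ Nat.le_add_right _ _
  have hblock (h : ∃ l, cum k + i + 1 ≤ cum l) : Nat.find h = k + 1 := by
    refine (Nat.find_eq_iff h).2 ⟨?_, fun l hl ↦ ?_⟩
    · rw [cum]
      omega
    · have := hmono (Nat.lt_succ_iff.1 hl)
      omega
  rw [psi, hblock, Nat.add_sub_cancel, add_assoc, Nat.add_sub_cancel_left]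

lemma sum_range_cum {M : Type*} [AddCommMonoid M] (K : ℕ) (g : ℕ → M) :
    ∑ m ∈ Finset.range (cum K), g m
      = ∑ k ∈ Finset.range K, ∑ i ∈ Finset.range (Nn (k + 1)), g (cum k + i) := by
  induction K with
  | zero => simp [cum]
  | succ K ih => rw [cum, Finset.sum_range_add, ih, Finset.sum_range_succ]

/-- The positions, counted from `0` inside the block, of the elements of `A` that lie in the
block `ψ^{(k+1)}` of the system. -/
def blockPart (A : Finset ℕ) (k : ℕ) : Finset ℕ :=
  {i ∈ Finset.range (Nn (k + 1)) | cum k + i ∈ A}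

lemma blockPart_subset (A : Finset ℕ) (k : ℕ) : blockPart A k ⊆ Finset.range (Nn (k + 1)) :=
  Finset.filter_subset _ _

lemma exists_subset_range_cum (A : Finset ℕ) : ∃ K, A ⊆ Finset.range (cum K) := by
  obtain ⟨K, hK⟩ := A.exists_nat_subset_range
  exact ⟨K, hK.trans (Finset.range_subset_range.2 (le_cum K))⟩

variable {A : Finset ℕ} {K : ℕ}

lemma sum_eq_sum_blockPart {M : Type*} [AddCommMonoid M] (hA : A ⊆ Finset.range (cum K))
    (g : ℕ → M) :
    ∑ m ∈ A, g m = ∑ k ∈ Finset.range K, ∑ i ∈ blockPart A k, g (cum k + i) := by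
  rw [← Finset.inter_eq_right.2 hA, ← Finset.sum_ite_mem, sum_range_cum]
  simp only [blockPart, Finset.sum_filter, Finset.inter_eq_right.2 hA]

lemma card_eq_sum_card_blockPart (hA : A ⊆ Finset.range (cum K)) :
    A.card = ∑ k ∈ Finset.range K, (blockPart A k).card := by
  simpa only [Finset.card_eq_sum_ones] using sum_eq_sum_blockPart hA fun _ ↦ 1

/-- The Walsh component `∑ |A_k| φ_k / √N_k` of `∑_{m ∈ A} ψ_m`, over the first `K` blocks. -/
noncomputable def walshPart (A : Finset ℕ) (K : ℕ) (t : ℝ) : ℝ :=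
  ∑ k ∈ Finset.range K, (blockPart A k).card * (phi (k + 1) t / √(Nn (k + 1)))

/-- The coefficient in `∑_{m ∈ A} ψ_m` of the Rademacher function paired with the `j`-th column
of the `(k+1)`-st Olevskiĭ matrix, for `p = (k, j)`. -/
noncomputable def rademacherCoeff (A : Finset ℕ) (p : Σ _ : ℕ, ℕ) : ℝ :=
  ∑ i ∈ blockPart A p.1, olevskii (10 ^ (p.1 + 1)) (i + 1) p.2

/-- The pairs `(k, j)` indexing the columns `2 ≤ j ≤ N_{k+1}` of the first `K` Olevskiĭ
matrices. -/
def columns (K : ℕ) : Finset (Σ _ : ℕ, ℕ) :=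
  (Finset.range K).sigma fun k ↦ Finset.Icc 2 (Nn (k + 1))

/- The Rademacher index `F_k + j - 1` is written as a successor, to match the enumeration
`k ↦ r_{k+1}` of the independent sequence; `2 ≤ j` rules out truncation. -/
lemma sum_psi_eq (hA : A ⊆ Finset.range (cum K)) (t : ℝ) :
    ∑ m ∈ A, psi m t = walshPart A K t
      + ∑ p ∈ columns K, rademacherCoeff A p * rademacher (Fn p.1 + p.2 - 2 + 1) t := by
  have hblock (k : ℕ) : ∑ i ∈ blockPart A k, psi (cum k + i) t
      = (blockPart A k).card * (phi (k + 1) t / √(Nn (k + 1)))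
        + ∑ j ∈ Finset.Icc 2 (Nn (k + 1)),
            rademacherCoeff A ⟨k, j⟩ * rademacher (Fn k + j - 2 + 1) t := by
    have hpsi (i : ℕ) (hi : i ∈ blockPart A k) :
        psi (cum k + i) t = psiBlock (k + 1) (i + 1) t := by
      rw [psi_cum_add (Finset.mem_range.1 (blockPart_subset A k hi))]
    rw [Finset.sum_congr rfl hpsi]
    simp only [psiBlock, Finset.sum_add_distrib, Finset.sum_const, nsmul_eq_mul,
      Nat.add_sub_cancel]
    rw [Finset.sum_comm]
    congr 1
    refine Finset.sum_congr rfl fun j hj ↦ ?_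
    have hindex : Fn k + j - 1 = Fn k + j - 2 + 1 := by
      have := (Finset.mem_Icc.1 hj).1
      omega
    rw [rademacherCoeff, Finset.sum_mul, hindex]
  rw [sum_eq_sum_blockPart hA, Finset.sum_congr rfl fun k _ ↦ hblock k, Finset.sum_add_distrib,
    walshPart, columns, Finset.sum_sigma]

lemma two_mul_sqrt_Nn_le (k : ℕ) : 2 * √(Nn (k + 1)) ≤ √(Nn (k + 2)) := by
  have hfour : 2 ^ 2 * Nn (k + 1) ≤ Nn (k + 2) := by
    rw [Nn, Nn, ← pow_add]
    have := Nat.one_le_pow (k + 1) 10 (by norm_num)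
    have : 10 ^ (k + 2) = 10 * 10 ^ (k + 1) := pow_succ' _ _
    gcongr <;> omega
  refine Real.le_sqrt_of_sq_le ?_
  rw [mul_pow, Real.sq_sqrt (Nat.cast_nonneg _)]
  exact_mod_cast hfour

lemma abs_walshPart_le (hA : A ⊆ Finset.range (cum K)) (t : ℝ) :
    |walshPart A K t| ≤ 6 * √A.card := by
  have hN_pos (k : ℕ) : 0 < √(Nn (k + 1) : ℝ) :=
    Real.sqrt_pos.2 (Nat.cast_pos.2 (Nat.two_pow_pos _))
  refine le_trans ?_
    (sum_min_sq_div_le hN_pos two_mul_sqrt_Nn_le (Real.sqrt_nonneg (A.card : ℝ)) K)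
  refine (Finset.abs_sum_le_sum_abs _ _).trans (Finset.sum_le_sum fun k hk ↦ ?_)
  have hcard_block : ((blockPart A k).card : ℝ) ≤ √(Nn (k + 1)) * √(Nn (k + 1)) := by
    rw [Real.mul_self_sqrt (Nat.cast_nonneg _)]
    exact_mod_cast (Finset.card_le_card (blockPart_subset A k)).trans_eq (Finset.card_range _)
  have hcard : ((blockPart A k).card : ℝ) ≤ √A.card ^ 2 := by
    rw [Real.sq_sqrt (Nat.cast_nonneg _), card_eq_sum_card_blockPart hA]
    exact_mod_cast Finset.single_le_sum (f := fun k ↦ (blockPart A k).card)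
      (fun _ _ ↦ Nat.zero_le _) hk
  calc |((blockPart A k).card : ℝ) * (phi (k + 1) t / √(Nn (k + 1)))|
      = (blockPart A k).card * |phi (k + 1) t| / √(Nn (k + 1)) := by
        rw [abs_mul, abs_div, Nat.abs_cast, abs_of_pos (hN_pos k), mul_div_assoc]
    _ ≤ (blockPart A k).card / √(Nn (k + 1)) := by
        gcongr
        exact mul_le_of_le_one_right (Nat.cast_nonneg _) (abs_walsh_le_one _ t)
    _ ≤ _ := le_min (div_le_of_le_mul₀ (hN_pos k).le (hN_pos k).le hcard_block) (by gcongr)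

lemma injOn_columns (K : ℕ) :
    Set.InjOn (fun p : Σ _ : ℕ, ℕ ↦ Fn p.1 + p.2 - 2) (columns K) := by
  have hmono : Monotone Fn := monotone_nat_of_le_succ fun k ↦ by
    have : 0 < Nn (k + 1) := Nat.two_pow_pos _
    rw [Fn]
    omega
  have hnext {k j : ℕ} (hj : j ∈ Finset.Icc 2 (Nn (k + 1))) {l : ℕ} (hkl : k < l) :
      Fn k + j ≤ Fn l + 1 := by
    have := hmono (Nat.succ_le_of_lt hkl)
    rw [Nat.succ_eq_add_one, Fn] at this
    rw [Finset.mem_Icc] at hj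
    omega
  rintro ⟨k, j⟩ hkj ⟨l, i⟩ hli (heq : Fn k + j - 2 = Fn l + i - 2)
  have hj : j ∈ Finset.Icc 2 (Nn (k + 1)) := (Finset.mem_sigma.1 hkj).2
  have hi : i ∈ Finset.Icc 2 (Nn (l + 1)) := (Finset.mem_sigma.1 hli).2
  have hj_two : 2 ≤ j := (Finset.mem_Icc.1 hj).1
  have hi_two : 2 ≤ i := (Finset.mem_Icc.1 hi).1
  rcases lt_trichotomy k l with hkl | rfl | hlk
  · have := hnext hj hkl
    omega
  · obtain rfl : j = i := by omega
    rfl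
  · have := hnext hi hlk
    omega

lemma sum_sq_rademacherCoeff_le (hA : A ⊆ Finset.range (cum K)) :
    ∑ p ∈ columns K, rademacherCoeff A p ^ 2 ≤ A.card := by
  rw [columns, Finset.sum_sigma, card_eq_sum_card_blockPart hA, Nat.cast_sum]
  refine Finset.sum_le_sum fun k _ ↦ ?_
  have hsubset := blockPart_subset A k
  rw [Nn] at hsubset ⊢
  simpa only [rademacherCoeff] using sum_sq_sum_olevskii_le_card hsubset

lemma LpNorm_sum_psi_le {r : ℝ} (hr : 0 < r) (A : Finset ℕ) :
    LpNorm r (fun t ↦ ∑ m ∈ A, psi m t)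
      ≤ r * (2 * Real.exp (6 + 1 / 2)) ^ (1 / r) * √A.card := by
  rcases A.eq_empty_or_nonempty with rfl | hA_nonempty
  · simp [LpNorm_zero hr.ne']
  obtain ⟨K, hA⟩ := exists_subset_range_cum A
  refine LpNorm_le_of_hasSubgaussianMGF
    (hasSubgaussianMGF_sum_rademacher (injOn_columns K) (rademacherCoeff A)) ?_ ?_ (fun t ↦ ?_) hr
  · simpa using hA_nonempty
  · rw [Real.sq_sqrt (Nat.cast_nonneg _)]
    simpa using sum_sq_rademacherCoeff_le hA
  · rw [sum_psi_eq hA]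
    exact (abs_add_le _ _).trans (by gcongr; exact abs_walshPart_le hA t)

end System

theorem stmt_13_general (q p : ℝ) (hq : 0 < q) (hp : 0 < p) :
    ∃ C : ℝ, ∀ A : Finset ℕ,
      LpNorm q (fun t => ∑ m ∈ A, psi m t) * LpNorm p (fun t => ∑ m ∈ A, psi m t)
        ≤ C * (A.card : ℝ) := by
  refine ⟨q * (2 * Real.exp (6 + 1 / 2)) ^ (1 / q) * (p * (2 * Real.exp (6 + 1 / 2)) ^ (1 / p)),
    fun A ↦ ?_⟩
  refine (mul_le_mul (LpNorm_sum_psi_le hq A) (LpNorm_sum_psi_le hp A) (LpNorm_nonneg p _)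
    (by positivity)).trans_eq ?_
  rw [mul_mul_mul_comm, Real.mul_self_sqrt (Nat.cast_nonneg _)]

/-- The system `B = {ψ_m}` is bi-democratic:
`‖∑_{m∈A} ψ_m‖_q ‖∑_{m∈A} ψ_m‖_p ≤ C |A|` for conjugate `1 < q < 2 < p < ∞`. -/
theorem stmt_13 (q p : ℝ) (hq1 : 1 < q) (hq2 : q < 2) (hp : 2 < p)
    (hqp : 1/q + 1/p = 1) :
    ∃ C : ℝ, ∀ A : Finset ℕ,
      LpNorm q (fun t => ∑ m ∈ A, psi m t) * LpNorm p (fun t => ∑ m ∈ A, psi m t)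
        ≤ C * (A.card : ℝ) :=
  stmt_13_general q p (by linarith) (by linarith)
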